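/- Let d ≥ 3 and define F_0 = ε, F_i = φ(F_{i−1})0 for 1 ≤ i ≤ d−1. Then for every 0 ≤ k ≤ d−1: (i) the word F_k·(d−1) is a suffix of φ^{d−1}(0); and (ii) the word φ^k(d−1)·F_k·(d−1) is a factor of the fixed point u_d. -/

import Mathlib

/-!
Since `φ(k) = 0(k+1)` for `k < d - 1`, induction gives `φ^k(0) = F_k·k` for `k ≤ d - 1`. The words
`F_k` form a chain for the suffix order, so part (i) follows from the case `k = d - 1` of this
formula. In particular `d - 1` is a factor of `u`, hence so are `(d-1)(d-1)`, which ends `φ(d-1)`,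
and its image `φ^k(d-1)·φ^k(d-1)`. The second copy of `φ^k(d-1)` begins with `F_k·(d-1)`, by
induction on `k`: `φ(F_k·(d-1))` begins with `φ(F_k)·0(d-1) = F_{k+1}·(d-1)`.
-/

namespace RichRT

variable {A : Type*}

/-- The word `w` occurs in the sequence `u` at position `j`. -/
def OccursAt (w : List A) (u : ℕ → A) (j : ℕ) : Prop :=
  w = (List.range w.length).map fun t => u (j + t)

/-- `w` is a factor of the infinite sequence `u`. -/
def IsFactorS (w : List A) (u : ℕ → A) : Prop :=
  ∃ j : ℕ, OccursAt w u j

/-- `u` is recurrent: every factor occurs infinitely often. -/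
def Recurrent (u : ℕ → A) : Prop :=
  ∀ w : List A, IsFactorS w u → ∀ N : ℕ, ∃ j, N ≤ j ∧ OccursAt w u j

/-- The number of distinct palindromic factors of a finite word. -/
noncomputable def palCount (w : List A) : ℕ :=
  Set.ncard {p : List A | p <:+: w ∧ p.reverse = p}

/-- A finite word of length `n` is rich if it has exactly `n+1` palindromic factors. -/
def RichWord (w : List A) : Prop := palCount w = w.length + 1

/-- A sequence is rich if all its factors are rich. -/
def RichSeq (u : ℕ → A) : Prop := ∀ w : List A, IsFactorS w u → RichWord w

/-- The prefix of length `k` of the periodic sequence `vvv⋯`. -/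
def powPref (v : List A) (k : ℕ) : List A := ((List.replicate k v).flatten).take k

/-- The set of exponents `k/|v|` of fractional powers `v^(k/|v|)` occurring in `u`,
with `|v| ≥ n`. -/
def expSet (u : ℕ → A) (n : ℕ) : Set ℝ :=
  {x | ∃ (v : List A) (k : ℕ), v ≠ [] ∧ n ≤ v.length ∧
    IsFactorS (powPref v k) u ∧ x = (k : ℝ) / (v.length : ℝ)}

/-- The critical exponent of a sequence, with values in `EReal`. -/
noncomputable def critExp (u : ℕ → A) : EReal :=
  sSup ((fun x : ℝ => (x : EReal)) '' expSet u 0)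

/-- The asymptotic critical exponent of a sequence: `⊤` if the critical exponent is `⊤`,
otherwise the limit (= infimum, by monotonicity) over `n` of the suprema of exponents of
powers `v^e` with `|v| ≥ n`. -/
noncomputable def acritExp (u : ℕ → A) : EReal :=
  if critExp u = ⊤ then ⊤
  else ⨅ n : ℕ, sSup ((fun x : ℝ => (x : EReal)) '' expSet u n)

/-- The morphism `φ_d` on letters: `i ↦ 0(i+1)` for `i < d-1`, `d-1 ↦ 0(d-1)(d-1)`. -/
def phiL (d : ℕ) (i : ℕ) : List ℕ :=
  if i < d - 1 then [0, i + 1] else [0, d - 1, d - 1]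

/-- The morphism `φ_d` on words. -/
def phiW (d : ℕ) (w : List ℕ) : List ℕ := w.flatMap (phiL d)

/-- `u` is the fixed point of `φ_d`: it begins with `0` and `φ_d(u) = u`, i.e. the image
of every prefix of `u` is again a prefix of `u`. -/
def IsPhiFixed (d : ℕ) (u : ℕ → ℕ) : Prop :=
  u 0 = 0 ∧ ∀ m : ℕ, OccursAt (phiW d ((List.range m).map u)) u 0

/-- Left extensions of `w` in `u`. -/
def Lext (u : ℕ → ℕ) (w : List ℕ) : Set (List ℕ) :=
  {x | ∃ i : ℕ, x = i :: w ∧ IsFactorS x u}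

/-- Right extensions of `w` in `u`. -/
def Rext (u : ℕ → ℕ) (w : List ℕ) : Set (List ℕ) :=
  {x | ∃ i : ℕ, x = w ++ [i] ∧ IsFactorS x u}

/-- Both-sided extensions of `w` in `u`. -/
def Bext (u : ℕ → ℕ) (w : List ℕ) : Set (List ℕ) :=
  {x | ∃ i j : ℕ, x = i :: (w ++ [j]) ∧ IsFactorS x u}

/-- `w` is a bispecial factor of `u`. -/
def Bispecial (u : ℕ → ℕ) (w : List ℕ) : Prop :=
  IsFactorS w u ∧ 2 ≤ (Lext u w).ncard ∧ 2 ≤ (Rext u w).ncard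

/-- The bilateral order `b(w) = #Bext(w) − #Lext(w) − #Rext(w) + 1`. -/
noncomputable def bord (u : ℕ → ℕ) (w : List ℕ) : ℤ :=
  ((Bext u w).ncard : ℤ) - ((Lext u w).ncard : ℤ) - ((Rext u w).ncard : ℤ) + 1

/-- The palindromes `F_0 = ε`, `F_i = φ(F_{i-1})0`. -/
def Fword (d : ℕ) : ℕ → List ℕ
  | 0 => []
  | i + 1 => phiW d (Fword d i) ++ [0]

/-- Membership in the set `𝒯` of bispecial triplets. -/
def TripleMem (d : ℕ) (u : ℕ → ℕ) (t : ℕ × List ℕ × ℕ) : Prop :=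
  Bispecial u t.2.1 ∧ t.1 < d - 1 ∧ t.2.2 < d - 1 ∧
    IsFactorS (t.1 :: t.2.1) u ∧ IsFactorS (t.2.1 ++ [t.2.2]) u

/-- The map `f` on triplets. -/
def fmap (d : ℕ) (t : ℕ × List ℕ × ℕ) : ℕ × List ℕ × ℕ :=
  ((t.1 + 1) % (d - 1),
   (if t.1 = d - 2 then [d - 1] else []) ++ phiW d t.2.1 ++ [0] ++
     (if t.2.2 = d - 2 then [d - 1] else []),
   (t.2.2 + 1) % (d - 1))

/-- The initial triplets `T_k = (0, ε, k)` for `k ≤ d-2` and `T_{d-1} = (0, d-1, 0)`. -/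
def Tinit (d k : ℕ) : ℕ × List ℕ × ℕ :=
  if k = d - 1 then (0, [d - 1], 0) else (0, ([] : List ℕ), k)

/-- The Parikh vector of a word. -/
def parikh (d : ℕ) (w : List ℕ) : Fin d → ℕ := fun i => w.count (i : ℕ)

/-- The incidence matrix of `φ_d`. -/
def Mmat (d : ℕ) : Matrix (Fin d) (Fin d) ℕ := fun i j => (phiL d (j : ℕ)).count (i : ℕ)

/-- `r` is a return word to `w` in `u`. -/
def ReturnWord (u : ℕ → ℕ) (w r : List ℕ) : Prop :=
  ∃ j ℓ : ℕ, j < ℓ ∧ OccursAt w u j ∧ OccursAt w u ℓ ∧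
    (∀ m, j < m → m < ℓ → ¬ OccursAt w u m) ∧
    r = (List.range (ℓ - j)).map fun t => u (j + t)

/-- `R` is a complete return word to `w` in `u`. -/
def CompleteReturn (u : ℕ → ℕ) (w R : List ℕ) : Prop :=
  ∃ r : List ℕ, ReturnWord u w r ∧ R = r ++ w

theorem isFactorS_iff_isInfix {u : ℕ → A} {w : List A} :
    IsFactorS w u ↔ ∃ m, w <:+: (List.range m).map u := by
  constructor
  · rintro ⟨j, hj⟩
    refine ⟨j + w.length, (List.range j).map u, [], ?_⟩
    rw [List.range_add, List.map_append, List.map_map, List.append_nil]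
    exact congrArg ((List.range j).map u ++ ·) hj
  · rintro ⟨m, s, t, hm⟩
    obtain rfl : m = s.length + w.length + t.length := by
      simpa [Nat.add_assoc] using (congrArg List.length hm).symm
    rw [List.range_add, List.range_add, List.map_append, List.map_append, List.map_map] at hm
    obtain ⟨hsw, -⟩ := List.append_inj hm (by simp)
    exact ⟨s.length, List.append_inj_right hsw (by simp)⟩

theorem IsFactorS.of_isInfix {u : ℕ → A} {v w : List A} (hw : IsFactorS w u) (hvw : v <:+: w) :
    IsFactorS v u := by
  obtain ⟨m, hm⟩ := isFactorS_iff_isInfix.mp hw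
  exact isFactorS_iff_isInfix.mpr ⟨m, hvw.trans hm⟩

theorem IsFactorS.flatMap {B : Type*} {f : A → List B} {u : ℕ → A} {v : ℕ → B}
    (hf : ∀ m, IsFactorS (((List.range m).map u).flatMap f) v) {w : List A} (hw : IsFactorS w u) :
    IsFactorS (w.flatMap f) v := by
  obtain ⟨m, hm⟩ := isFactorS_iff_isInfix.mp hw
  exact (hf m).of_isInfix (hm.flatMap f)

section Words

variable (d : ℕ)

theorem phiW_append (v w : List ℕ) : phiW d (v ++ w) = phiW d v ++ phiW d w :=
  List.flatMap_append

theorem iterate_phiW_append (k : ℕ) (v w : List ℕ) :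
    (phiW d)^[k] (v ++ w) = (phiW d)^[k] v ++ (phiW d)^[k] w :=
  Function.Semiconj₂.iterate (phiW_append d) k v w

theorem phiW_singleton_sub_one : phiW d [d - 1] = [0, d - 1, d - 1] := by
  simp [phiW, phiL]

theorem fword_suffix_fword_succ (k : ℕ) : Fword d k <:+ Fword d (k + 1) := by
  induction k with
  | zero => exact List.nil_suffix
  | succ k ih => exact List.suffix_append_self_iff.mpr (ih.flatMap (phiL d))

theorem fword_suffix_fword {k n : ℕ} (hkn : k ≤ n) : Fword d k <:+ Fword d n :=
  Nat.rel_of_forall_rel_succ_of_le (· <:+ ·) (fword_suffix_fword_succ d) hkn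

theorem fword_append_sub_one_prefix (k : ℕ) :
    Fword d k ++ [d - 1] <+: (phiW d)^[k] [d - 1] := by
  induction k with
  | zero => exact List.prefix_rfl
  | succ k ih =>
    have prefix_phiW : Fword d (k + 1) ++ [d - 1] <+: phiW d (Fword d k ++ [d - 1]) := by
      rw [phiW_append, phiW_singleton_sub_one, Fword, List.append_assoc]
      exact (List.prefix_append_right_inj _).mpr ⟨[d - 1], rfl⟩
    rw [Function.iterate_succ_apply']
    exact prefix_phiW.trans (ih.flatMap (phiL d))

variable {d}

theorem phiW_singleton_of_lt {i : ℕ} (hi : i < d - 1) : phiW d [i] = [0, i + 1] := by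
  simp [phiW, phiL, hi]

theorem iterate_phiW_zero {k : ℕ} (hk : k ≤ d - 1) : (phiW d)^[k] [0] = Fword d k ++ [k] := by
  induction k with
  | zero => rfl
  | succ k ih =>
    rw [Function.iterate_succ_apply', ih (Nat.le_of_succ_le hk), phiW_append,
      phiW_singleton_of_lt hk, Fword, List.append_assoc, List.singleton_append]

theorem fword_append_sub_one_suffix {k : ℕ} (hk : k ≤ d - 1) :
    Fword d k ++ [d - 1] <:+ (phiW d)^[d - 1] [0] := by
  rw [iterate_phiW_zero le_rfl]
  exact List.suffix_append_self_iff.mpr (fword_suffix_fword d hk)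

end Words

namespace IsPhiFixed

variable {d : ℕ} {u : ℕ → ℕ}

theorem isFactorS_zero (hu : IsPhiFixed d u) : IsFactorS [0] u :=
  ⟨0, by simp [OccursAt, hu.1]⟩

theorem isFactorS_phiW (hu : IsPhiFixed d u) {w : List ℕ} (hw : IsFactorS w u) :
    IsFactorS (phiW d w) u :=
  hw.flatMap fun m => ⟨0, hu.2 m⟩

theorem isFactorS_iterate_phiW (hu : IsPhiFixed d u) {w : List ℕ} (hw : IsFactorS w u) (k : ℕ) :
    IsFactorS ((phiW d)^[k] w) u :=
  Function.Iterate.rec (IsFactorS · u) hw (fun _ => hu.isFactorS_phiW) k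

theorem isFactorS_sub_one (hu : IsPhiFixed d u) : IsFactorS [d - 1] u :=
  (hu.isFactorS_iterate_phiW hu.isFactorS_zero (d - 1)).of_isInfix
    (fword_append_sub_one_suffix (Nat.zero_le _)).isInfix

theorem isFactorS_sub_one_sub_one (hu : IsPhiFixed d u) : IsFactorS [d - 1, d - 1] u := by
  have phiW_isFactorS := hu.isFactorS_phiW hu.isFactorS_sub_one
  rw [phiW_singleton_sub_one] at phiW_isFactorS
  exact phiW_isFactorS.of_isInfix (List.suffix_cons 0 _).isInfix

theorem isFactorS_iterate_phiW_sub_one_append (hu : IsPhiFixed d u) (k : ℕ) :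
    IsFactorS ((phiW d)^[k] [d - 1] ++ (Fword d k ++ [d - 1])) u := by
  have square_isFactorS : IsFactorS ((phiW d)^[k] [d - 1] ++ (phiW d)^[k] [d - 1]) u := by
    rw [← iterate_phiW_append]
    exact hu.isFactorS_iterate_phiW hu.isFactorS_sub_one_sub_one k
  exact square_isFactorS.of_isInfix
    ((List.prefix_append_right_inj _).mpr (fword_append_sub_one_prefix d k)).isInfix

end IsPhiFixed

theorem statement15_general (n : ℕ) (u : ℕ → ℕ) (hu : IsPhiFixed (n + 1) u) (k : ℕ) :
    (k ≤ n → Fword (n + 1) k ++ [n] <:+ (phiW (n + 1))^[n] [0]) ∧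
    IsFactorS ((phiW (n + 1))^[k] [n] ++ (Fword (n + 1) k ++ [n])) u :=
  ⟨fun hk => fword_append_sub_one_suffix (d := n + 1) hk,
    hu.isFactorS_iterate_phiW_sub_one_append k⟩

/-- Let `d ≥ 3` and `F_0 = ε`, `F_i = φ(F_{i−1})0`. Then for `0 ≤ k ≤ d−1`:
(i) `F_k·(d−1)` is a suffix of `φ^{d−1}(0)`; (ii) `φ^k(d−1)·F_k·(d−1)` is a factor of the
fixed point `u_d`. -/
theorem statement15 (d : ℕ) (hd : 3 ≤ d) (u : ℕ → ℕ) (hu : IsPhiFixed d u)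
    (k : ℕ) (hk : k ≤ d - 1) :
    (Fword d k ++ [d - 1]) <:+ (phiW d)^[d - 1] [0] ∧
    IsFactorS ((phiW d)^[k] [d - 1] ++ (Fword d k ++ [d - 1])) u := by
  obtain ⟨n, rfl⟩ := Nat.exists_eq_add_of_le' (Nat.one_le_of_lt hd)
  exact (statement15_general n u hu k).imp_left (· hk)
end RichRT
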